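/- arXiv:2102.10517 — 2 statements merged into one kernel-verified Lean document; each statement's English description precedes it below -/
import Mathlib

section
/- With p prime, m ≥ 1, q ≥ 1, λ = lcm(p,q), π a permutation of {1,…,m}, c_1,…,c_m, c ∈ Z_λ as in the construction, let 2 ≤ v ≤ m and let γ, δ ∈ {0,…,p−1}^m be digit vectors with γ_{π(j)} = δ_{π(j)} for all 1 ≤ j < v and γ_{π(v)} ≠ δ_{π(v)}. For k ∈ {1,…,p−1}, let γ^k (respectively δ^k) be obtained from γ (respectively δ) by replacing the entry at position π(v−1) with γ_{π(v−1)} − k mod p (respectively δ_{π(v−1)} − k mod p). Then for every α, t, t' ∈ {0,…,p−1}: ω_λ^{a_t^α(γ) − a_{t'}^α(δ)} + Σ_{k=1}^{p−1} ω_λ^{a_t^α(γ^k) − a_{t'}^α(δ^k)} = 0. -/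
open Finset

/-- `ω_λ = exp(2π√(-1)/λ)`. -/
noncomputable def omg (lam : ℕ) : ℂ := Complex.exp (2 * Real.pi * Complex.I / lam)

/-- Aperiodic cross-correlation of two length-`L` complex sequences at shift `u`. -/
noncomputable def aCorr (L : ℕ) (a b : ℕ → ℂ) (u : ℤ) : ℂ :=
  if 0 ≤ u then
    ∑ i ∈ Finset.range (L - u.toNat), a (i + u.toNat) * (starRingEnd ℂ) (b i)
  else
    ∑ i ∈ Finset.range (L - (-u).toNat), a i * (starRingEnd ℂ) (b (i + (-u).toNat))

/-- Cross-correlation sum of two `M × L` codes (matrices given row-wise). -/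
noncomputable def codeCorr (M L : ℕ) (C D : ℕ → ℕ → ℂ) (u : ℤ) : ℂ :=
  ∑ ν ∈ Finset.range M, aCorr L (C ν) (D ν) u

/-- Base-`p` digit vector of `γ` (digit `j` is `γ / p^j % p`). -/
def dig (p m γ : ℕ) : Fin m → ℕ := fun j => γ / p ^ (j : ℕ) % p

/-- The quadratic multivariable function
`f(v) = (λ/p)·Σ_{β=1}^{m-1} v_{π(β)} v_{π(β+1)} + Σ_{β=1}^{m} c_β v_β` (as an integer). -/
def fQuad (p m lam : ℕ) (π : Equiv.Perm (Fin m)) (cf : Fin m → ZMod lam)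
    (v : Fin m → ℕ) : ℤ :=
  ((lam / p : ℕ) : ℤ) * ∑ β : Fin (m - 1),
      (v (π (Fin.castLE (Nat.sub_le m 1) β)) : ℤ) *
        (v (π ⟨(β : ℕ) + 1, by have := β.isLt; omega⟩) : ℤ)
    + ∑ β : Fin m, ((cf β).val : ℤ) * (v β : ℤ)

/-- `a_t^α(v) = f(v) + (λ/p)·α·v_{π(1)} + (λ/p)·t·v_{π(m)} + c` (as an integer). -/
def aFun (p m lam : ℕ) (hm : 0 < m) (π : Equiv.Perm (Fin m)) (cf : Fin m → ZMod lam)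
    (c : ZMod lam) (t α : ℕ) (v : Fin m → ℕ) : ℤ :=
  fQuad p m lam π cf v
    + ((lam / p : ℕ) : ℤ) * (α : ℤ) * (v (π ⟨0, hm⟩) : ℤ)
    + ((lam / p : ℕ) : ℤ) * (t : ℤ) * (v (π ⟨m - 1, by omega⟩) : ℤ)
    + ((c.val : ℕ) : ℤ)

/-- The code `C_t^p`: the `p × p^m` matrix whose `α`-th row is `ψ(a_t^α)`. -/
noncomputable def codeC (p m lam : ℕ) (hm : 0 < m) (π : Equiv.Perm (Fin m))
    (cf : Fin m → ZMod lam) (c : ZMod lam) (t : ℕ) : ℕ → ℕ → ℂ :=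
  fun α γ => omg lam ^ (aFun p m lam hm π cf c t α (dig p m γ))

/-!
Read the digits along the path `π` and add `α` in front and `t` behind: the quadratic part of
`a_t^α` becomes the sum of products of consecutive terms of one sequence. Hence `a_t^α` is affine
in each single digit, with slope `λ / p` times the sum of the two neighbours plus a constant that
does not depend on the digits. If the digit of `γ` and of `δ` at the same position is replaced by
the same `x`, the difference of the phases is affine in `x` with slope `λ / p` times the difference
of the neighbour sums. The entries `γ^k` run through all residues `x`, so what has to vanish is a
sum of all powers `ξ ^ x`, `x < p`, of a `p`-th root of unity `ξ`, which does as soon as `ξ ≠ 1`.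
-/

theorem sum_mul_update {ι R : Type*} [Fintype ι] [DecidableEq ι] [NonUnitalNonAssocSemiring R]
    (c w : ι → R) (i : ι) (x : R) :
    ∑ j, c j * Function.update w i x j = ∑ j, c j * Function.update w i 0 j + c i * x := by
  have hsplit : Function.update w i x = Function.update w i 0 + Pi.single i x := by
    ext j
    rcases eq_or_ne j i with rfl | hj <;> simp [*]
  simp only [hsplit, Pi.add_apply, mul_add, sum_add_distrib]
  exact congrArg _ (dotProduct_single c x i)

theorem sum_range_mul_succ_update {R : Type*} [CommSemiring R] (e : ℕ → R) (x : R) {i N : ℕ}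
    (hi : i + 2 ≤ N) :
    ∑ j ∈ range N, Function.update e (i + 1) x j * Function.update e (i + 1) x (j + 1) =
      ∑ j ∈ range N, Function.update e (i + 1) 0 j * Function.update e (i + 1) 0 (j + 1) +
        (e i + e (i + 2)) * x := by
  induction N, hi using Nat.le_induction with
  | base =>
    have hprefix : ∀ y, ∑ j ∈ range i, Function.update e (i + 1) y j *
        Function.update e (i + 1) y (j + 1) = ∑ j ∈ range i, e j * e (j + 1) := fun y =>
      sum_congr rfl fun j hj => by
        have hj := mem_range.mp hj
        rw [Function.update_of_ne (by omega), Function.update_of_ne (by omega)]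
    simp only [sum_range_succ, hprefix, ne_eq, Nat.left_eq_add, one_ne_zero, not_false_eq_true,
      Function.update_of_ne, Function.update_self, Nat.add_eq_left, mul_zero, add_zero, zero_mul]
    ring
  | succ N hN ih =>
    have hfar : ∀ y, Function.update e (i + 1) y N * Function.update e (i + 1) y (N + 1) =
        e N * e (N + 1) := fun y => by
      rw [Function.update_of_ne (by omega), Function.update_of_ne (by omega)]
    simp only [sum_range_succ _ N, ih, hfar]
    ring

theorem add_sum_Icc_add_sub_mod_eq_sum_range {M : Type*} [AddCommMonoid M] (F : ℕ → M) {g p : ℕ}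
    (hg : g < p) : F g + ∑ k ∈ Icc 1 (p - 1), F ((g + (p - k)) % p) = ∑ x ∈ range p, F x := by
  have hp : 0 < p := by omega
  have hinv : ∀ k < p, (g + (p - (g + (p - k)) % p)) % p = k := fun k hk => by
    rcases le_or_gt k g with h | h
    · rw [show g + (p - k) = g - k + p by omega, Nat.add_mod_right,
        Nat.mod_eq_of_lt (by omega : g - k < p), show g + (p - (g - k)) = k + p by omega,
        Nat.add_mod_right, Nat.mod_eq_of_lt hk]
    · rw [Nat.mod_eq_of_lt (by omega : g + (p - k) < p), show g + (p - (g + (p - k))) = k by omega,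
        Nat.mod_eq_of_lt hk]
  have hzero : F ((g + (p - 0)) % p) = F g := by
    rw [Nat.sub_zero, Nat.add_mod_right, Nat.mod_eq_of_lt hg]
  have hIcc : Icc 1 (p - 1) = Ico (0 + 1) p := by
    ext k
    simp only [mem_Icc, mem_Ico]
    omega
  have hmem : ∀ k ∈ range p, (g + (p - k)) % p ∈ range p := fun k _ =>
    mem_range.mpr (Nat.mod_lt _ hp)
  calc F g + ∑ k ∈ Icc 1 (p - 1), F ((g + (p - k)) % p)
      = ∑ k ∈ range p, F ((g + (p - k)) % p) := by
        rw [range_eq_Ico, sum_eq_sum_Ico_succ_bot hp, hzero, hIcc]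
    _ = ∑ x ∈ range p, F x :=
        sum_nbij' (fun k => (g + (p - k)) % p) (fun k => (g + (p - k)) % p) hmem hmem
          (fun k hk => hinv k (mem_range.mp hk)) (fun k hk => hinv k (mem_range.mp hk))
          fun _ _ => rfl

theorem sum_range_zpow_mul_eq_zero {K : Type*} [Field K] {ζ : K} {p : ℕ}
    (hζ : IsPrimitiveRoot ζ p) {d : ℤ} (hd : ¬ (p : ℤ) ∣ d) :
    ∑ x ∈ range p, ζ ^ (d * x) = 0 := by
  have hne : ζ ^ d ≠ 1 := mt (hζ.zpow_eq_one_iff_dvd d).mp hd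
  have hpow : (ζ ^ d) ^ p = 1 := by
    rw [← zpow_natCast, zpow_comm, zpow_natCast, hζ.pow_eq_one, one_zpow]
  simp only [zpow_mul, zpow_natCast]
  rw [geom_sum_eq hne, hpow, sub_self, zero_div]

theorem isPrimitiveRoot_omg_pow_div {p lam : ℕ} (hlam : lam ≠ 0) (hdvd : p ∣ lam) :
    IsPrimitiveRoot (omg lam ^ (lam / p)) p :=
  (Complex.isPrimitiveRoot_exp lam hlam).pow (Nat.pos_of_ne_zero hlam)
    (Nat.div_mul_cancel hdvd).symm

section Phase

variable {m : ℕ} (π : Equiv.Perm (Fin m)) (α t : ℕ) (w : Fin m → ℕ) (i : Fin m)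

/-- The digits of `w` read along `π`, with `α` in front of them and `t` behind them, so that the
digit `w (π i)` has index `i + 1`. It absorbs the boundary terms `α v_{π(1)}` and `t v_{π(m)}` of
`a_t^α` into the quadratic sum; all entries from index `m + 1` on are `t`. -/
def extendedDigits : ℕ → ℕ
  | 0 => α
  | j + 1 => if h : j < m then w (π ⟨j, h⟩) else t

/-- The sum of the two neighbours of the digit `w (π i)` along `π`; the neighbour missing at an end
of the path is `α` or `t`. -/
def neighbourSum : ℕ := extendedDigits π α t w i + extendedDigits π α t w (i + 2)

theorem extendedDigits_update (x : ℕ) :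
    extendedDigits π α t (Function.update w (π i) x) =
      Function.update (extendedDigits π α t w) (i + 1) x := by
  ext j
  cases j with
  | zero => rfl
  | succ j =>
    by_cases hj : j < m
    · simp [extendedDigits, Function.update_apply, hj, Fin.ext_iff]
    · simp [extendedDigits, hj, show j ≠ i by omega]

theorem aFun_eq_sum_extendedDigits (p lam : ℕ) (hm : 0 < m) (cf : Fin m → ZMod lam)
    (c : ZMod lam) :
    aFun p m lam hm π cf c t α w =
      ((lam / p * ∑ j ∈ range (m + 1), extendedDigits π α t w j * extendedDigits π α t w (j + 1) +
        ∑ j, (cf j).val * w j + c.val : ℕ) : ℤ) := by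
  obtain ⟨k, rfl⟩ : ∃ k, m = k + 1 := ⟨m - 1, by omega⟩
  have hinner : ∑ j ∈ range k,
      extendedDigits π α t w (j + 1) * extendedDigits π α t w (j + 1 + 1) =
        ∑ j : Fin (k + 1 - 1), w (π (Fin.castLE (Nat.sub_le _ 1) j)) * w (π ⟨j + 1, by omega⟩) := by
    refine (sum_range _).trans (sum_congr rfl fun j _ => ?_)
    rw [extendedDigits, extendedDigits, dif_pos, dif_pos]
    rfl
  have hfirst : extendedDigits π α t w 1 = w (π ⟨0, hm⟩) := by simp [extendedDigits]
  have hlast : extendedDigits π α t w (k + 1) = w (π ⟨k, k.lt_succ_self⟩) := by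
    simp [extendedDigits]
  have hend : extendedDigits π α t w (k + 1 + 1) = t := by simp [extendedDigits]
  rw [sum_range_succ, sum_range_succ', hinner, hfirst, hlast, hend]
  simp only [aFun, fQuad, extendedDigits]
  push_cast
  ring

theorem aFun_update (p lam : ℕ) (hm : 0 < m) (cf : Fin m → ZMod lam) (c : ZMod lam) (x : ℕ) :
    aFun p m lam hm π cf c t α (Function.update w (π i) x) =
      aFun p m lam hm π cf c t α (Function.update w (π i) 0) +
        ((lam / p * neighbourSum π α t w i + (cf (π i)).val) * x : ℕ) := by
  simp only [aFun_eq_sum_extendedDigits, extendedDigits_update]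
  rw [sum_range_mul_succ_update _ x (by omega), sum_mul_update _ w, neighbourSum]
  push_cast
  ring

variable {π i} in
theorem neighbourSum_modEq_iff {p t' : ℕ} {γ δ : Fin m → ℕ} (hi : (i : ℕ) + 1 < m)
    (heq : ∀ j : Fin m, (j : ℕ) + 1 = i → γ (π j) = δ (π j)) :
    neighbourSum π α t γ i ≡ neighbourSum π α t' δ i [MOD p] ↔
      γ (π ⟨i + 1, hi⟩) ≡ δ (π ⟨i + 1, hi⟩) [MOD p] := by
  have hpred : extendedDigits π α t γ i = extendedDigits π α t' δ i := by
    obtain ⟨_ | j, hj⟩ := i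
    · rfl
    · simpa [extendedDigits, Nat.lt_of_succ_lt hj] using heq ⟨j, by omega⟩ rfl
  have hsucc : ∀ s w, extendedDigits π α s w (i + 2) = w (π ⟨i + 1, hi⟩) := fun s w => by
    simp [extendedDigits, hi]
  rw [neighbourSum, neighbourSum, hpred, hsucc, hsucc]
  exact ⟨Nat.ModEq.add_left_cancel' _, Nat.ModEq.add_left _⟩

end Phase

theorem sum_omg_zpow_aFun_update_sub_eq_zero {p m lam : ℕ} (hlam : lam ≠ 0) (hdvd : p ∣ lam)
    (hm : 0 < m) (π : Equiv.Perm (Fin m)) (cf : Fin m → ZMod lam) (c : ZMod lam)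
    {α α' t t' : ℕ} {γ δ : Fin m → ℕ} {i : Fin m}
    (hne : ¬ neighbourSum π α t γ i ≡ neighbourSum π α' t' δ i [MOD p]) :
    ∑ x ∈ range p, omg lam ^
      (aFun p m lam hm π cf c t α (Function.update γ (π i) x) -
        aFun p m lam hm π cf c t' α' (Function.update δ (π i) x)) = 0 := by
  set e : ℤ := aFun p m lam hm π cf c t α (Function.update γ (π i) 0) -
    aFun p m lam hm π cf c t' α' (Function.update δ (π i) 0) with he
  set d : ℤ := neighbourSum π α t γ i - neighbourSum π α' t' δ i with hd
  have hphase : ∀ x : ℕ, aFun p m lam hm π cf c t α (Function.update γ (π i) x) -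
      aFun p m lam hm π cf c t' α' (Function.update δ (π i) x) = e + (lam / p : ℕ) * (d * x) := by
    intro x
    rw [aFun_update, aFun_update _ _ _ δ, he, hd]
    push_cast
    ring
  have hdvd_d : ¬ (p : ℤ) ∣ d := fun h => hne (Nat.modEq_iff_dvd.mpr h).symm
  have hω : omg lam ≠ 0 := Complex.exp_ne_zero _
  simp only [hphase, zpow_add₀ hω, zpow_mul _ ((lam / p : ℕ) : ℤ), zpow_natCast (omg lam)]
  rw [← mul_sum, sum_range_zpow_mul_eq_zero (isPrimitiveRoot_omg_pow_div hlam hdvd) hdvd_d,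
    mul_zero]

theorem statement5_general {p m lam : ℕ} (hlam : lam ≠ 0) (hdvd : p ∣ lam)
    (hm : 0 < m) (π : Equiv.Perm (Fin m)) (cf : Fin m → ZMod lam) (c : ZMod lam)
    {α α' t t' : ℕ} {γ δ : Fin m → ℕ} {i : Fin m} (hγ : γ (π i) < p) (heq : γ (π i) = δ (π i))
    (hne : ¬ neighbourSum π α t γ i ≡ neighbourSum π α' t' δ i [MOD p]) :
    omg lam ^ (aFun p m lam hm π cf c t α γ - aFun p m lam hm π cf c t' α' δ) +
      ∑ k ∈ Icc 1 (p - 1), omg lam ^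
        (aFun p m lam hm π cf c t α
            (Function.update γ (π i) ((γ (π i) + (p - k)) % p)) -
          aFun p m lam hm π cf c t' α'
            (Function.update δ (π i) ((δ (π i) + (p - k)) % p))) = 0 := by
  have hreindex := add_sum_Icc_add_sub_mod_eq_sum_range (fun x => omg lam ^
    (aFun p m lam hm π cf c t α (Function.update γ (π i) x) -
      aFun p m lam hm π cf c t' α' (Function.update δ (π i) x))) hγ
  have hδ : Function.update δ (π i) (γ (π i)) = δ := by rw [heq, Function.update_eq_self]
  rw [sum_omg_zpow_aFun_update_sub_eq_zero hlam hdvd hm π cf c hne] at hreindex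
  simpa only [Function.update_eq_self, hδ, ← heq] using hreindex

/-- with `γ, δ` agreeing at positions `π(1),…,π(v-1)` but differing at
`π(v)`, the term at `(γ,δ)` plus the terms at the shifted pairs `(γ^k,δ^k)`,
`k = 1,…,p-1`, sum to zero. -/
theorem statement5 (p : ℕ) (hp : p.Prime) (m : ℕ) (hm : 0 < m) (q : ℕ) (hq : 0 < q)
    (π : Equiv.Perm (Fin m)) (cf : Fin m → ZMod (Nat.lcm p q)) (c : ZMod (Nat.lcm p q))
    (v : ℕ) (hv2 : 2 ≤ v) (hvm : v ≤ m)
    (γ δ : Fin m → ℕ) (hγ : ∀ j, γ j < p) (hδ : ∀ j, δ j < p)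
    (heq : ∀ j : Fin m, (j : ℕ) < v - 1 → γ (π j) = δ (π j))
    (hne : γ (π ⟨v - 1, by omega⟩) ≠ δ (π ⟨v - 1, by omega⟩))
    (α t t' : ℕ) (hα : α < p) (ht : t < p) (ht' : t' < p) :
    omg (Nat.lcm p q) ^
        (aFun p m (Nat.lcm p q) hm π cf c t α γ
          - aFun p m (Nat.lcm p q) hm π cf c t' α δ)
      + ∑ k ∈ Finset.Icc 1 (p - 1),
          omg (Nat.lcm p q) ^
            (aFun p m (Nat.lcm p q) hm π cf c t α
                (Function.update γ (π ⟨v - 2, by omega⟩)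
                  ((γ (π ⟨v - 2, by omega⟩) + (p - k)) % p))
              - aFun p m (Nat.lcm p q) hm π cf c t' α
                (Function.update δ (π ⟨v - 2, by omega⟩)
                  ((δ (π ⟨v - 2, by omega⟩) + (p - k)) % p))) = 0 := by
  obtain ⟨n, rfl⟩ : ∃ n, v = n + 2 := ⟨v - 2, by omega⟩
  have hdigit : ¬ γ (π ⟨n + 1, by omega⟩) ≡ δ (π ⟨n + 1, by omega⟩) [MOD p] := fun h =>
    hne (h.eq_of_lt_of_lt (hγ _) (hδ _))
  exact statement5_general (i := ⟨n, by omega⟩) (Nat.lcm_ne_zero hp.ne_zero hq.ne')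
    (Nat.dvd_lcm_left p q) hm π cf c (hγ _) (heq _ (Nat.lt_succ_self n))
    (mt (neighbourSum_modEq_iff α t hvm fun j hj =>
      heq j (Nat.lt_succ_of_le (Nat.le_of_succ_le hj.le))).mp hdigit)
end

section
/- Let k ≥ 1, let p_1,…,p_k be primes, m_1,…,m_k ≥ 1 integers, and q ≥ 1 an integer with p_i | q for every i (so λ = lcm(p_1,…,p_k,q) = q). Set K = ∏_{i=1}^k p_i and L = ∏_{i=1}^k p_i^{m_i}. Then the family S = {C_{(t_1,…,t_k)} : t_i ∈ {0,…,p_i−1} for i = 1,…,k} of K codes, each a K × L complex matrix, forms a (K, K, L)-CCC: for all index tuples t = (t_1,…,t_k), t' = (t_1',…,t_k') and all integers u with |u| < L, C(C_t, C_{t'})(u) = KL if u = 0 and t = t', C(C_t, C_{t'})(u) = 0 if 0 < |u| < L and t = t', and C(C_t, C_{t'})(u) = 0 for all |u| < L if t ≠ t'. -/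
open Finset

/-- For a lexicographic enumeration (block `0` slowest, block `k-1` fastest) of tuples
with block `j` ranging over `{0,…,Lf j - 1}`, `blockIdx k Lf n j` is the `j`-th
component of the tuple at overall position `n`. -/
def blockIdx (k : ℕ) (Lf : Fin k → ℕ) (n : ℕ) (j : Fin k) : ℕ :=
  n / (∏ l ∈ Finset.univ.filter (fun l => j < l), Lf l) % Lf j

/-- The code `C_{(t_1,…,t_k)}`: the `(∏ p_i) × (∏ p_i^{m_i})` matrix whose row indexed
(lexicographically) by `(α_1,…,α_k)` is `ψ(a_{t_1}^{α_1} + … + a_{t_k}^{α_k})`. -/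
noncomputable def bigCode (k : ℕ) (p m : Fin k → ℕ) (hm : ∀ i, 0 < m i) (q : ℕ)
    (π : ∀ i, Equiv.Perm (Fin (m i))) (cf : ∀ i, Fin (m i) → ZMod q)
    (t : Fin k → ℕ) : ℕ → ℕ → ℂ :=
  fun r n => omg q ^ (∑ i, aFun (p i) (m i) q (hm i) (π i) (cf i) 0 (t i)
      (blockIdx k p r i)
      (dig (p i) (m i) (blockIdx k (fun j => p j ^ m j) n i)))

/-!
Encode a sequence `a` by the Laurent polynomial `∑ a n T ^ n`, and let `star` conjugate the
coefficients and send `T` to `T⁻¹`; then correlations are the coefficients of `A * star B`.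

In the quadratic phase `α v_{π(1)} + ∑ v_{π(j)} v_{π(j+1)} + t v_{π(m)}` the indices `α` and `t`
are the two ends of a path, so the polynomial of the block sequence `a_t^α` is the `(α, t)`
entry of a matrix `M = F D₁ F D₂ ⋯ D_m F`. Here `F` is the discrete Fourier matrix, with `Fᴴ F =
p`, and the `D_j`, carrying the linear phases and the powers of `T` of the digits, are diagonal
and unitary. Hence `Mᴴ M = p ^ (m + 1)`, which is the claim for one block: its off-diagonal
entries vanish and its diagonal entries are constant polynomials. Since the mixed-radix
numeration of positions is additive, the polynomial of a row of the code is a product over the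
blocks, the `i`-th one in a power of `T`, and the sum over all rows factors accordingly.
-/

section Unitary

theorem star_apply_of_forall_mem_unitary {R S : Type*} [AddGroup R] [Monoid S] [StarMul S]
    {χ : AddChar R S} (hχ : ∀ a, χ a ∈ unitary S) (a : R) : star (χ a) = χ (-a) :=
  left_inv_eq_right_inv (Unitary.star_mul_self_of_mem (hχ a)) <| by
    rw [← AddChar.map_add_eq_mul, add_neg_cancel, AddChar.map_zero_eq_one]

theorem conjTranspose_diagonal_mul_self {ι S : Type*} [Fintype ι] [DecidableEq ι] [Semiring S]
    [StarRing S] {d : ι → S} (hd : ∀ i, d i ∈ unitary S) :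
    (Matrix.diagonal d).conjTranspose * Matrix.diagonal d = 1 := by
  rw [Matrix.diagonal_conjTranspose, Matrix.diagonal_mul_diagonal, ← Matrix.diagonal_one]
  exact congrArg _ (funext fun i => Unitary.star_mul_self_of_mem (hd i))

end Unitary

section PathMatrix

variable {R S : Type*} [CommRing R] {n : ℕ}

/-- The sum of the products of consecutive vertices along the path `a, x 0, …, x (n - 1), b`. -/
def pathPhase (a b : R) (x : Fin n → R) : R :=
  ∑ j : Fin (n + 1), (Fin.cons a x : Fin (n + 1) → R) j * (Fin.snoc x b : Fin (n + 1) → R) j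

theorem pathPhase_of_isEmpty (a b : R) (x : Fin 0 → R) : pathPhase a b x = a * b := by
  simp [pathPhase, Fin.snoc]

theorem pathPhase_cons (a b z : R) (x : Fin n → R) :
    pathPhase a b (Fin.cons z x : Fin (n + 1) → R) = a * z + pathPhase z b x := by
  rw [pathPhase, ← Fin.cons_snoc_eq_snoc_cons, Fin.sum_univ_succ]
  rfl

theorem pathPhase_succ (a b : R) (x : Fin (n + 1) → R) :
    pathPhase a b x =
      a * x 0 + ∑ j : Fin n, x j.castSucc * x j.succ + x (Fin.last n) * b := by
  have hfirst : (Fin.snoc x b : Fin (n + 2) → R) 0 = x 0 := Fin.snoc_castSucc (i := 0) ..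
  rw [pathPhase, Fin.sum_univ_succ]
  simp only [Fin.cons_zero, Fin.cons_succ, hfirst]
  rw [Fin.sum_univ_castSucc, ← add_assoc]
  simp only [Fin.succ_castSucc, Fin.snoc_castSucc, Fin.succ_last, Fin.snoc_last]

variable [Fintype R] [DecidableEq R] [CommRing S] {χ : AddChar R S}

/-- The discrete Fourier matrix `(χ (a * b))` of an additive character. -/
def fourierMatrix (χ : AddChar R S) : Matrix R R S :=
  Matrix.of fun a b => χ (a * b)

/-- The product `F * D₀ * F * D₁ * ⋯ * D_{n-1} * F`, where `F` is the discrete Fourier matrix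
of `χ` and `D_j` is the diagonal matrix with entries `h j`. -/
def pathMatrix (χ : AddChar R S) : {n : ℕ} → (Fin n → R → S) → Matrix R R S
  | 0, _ => fourierMatrix χ
  | _ + 1, h => fourierMatrix χ * Matrix.diagonal (h 0) * pathMatrix χ (Fin.tail h)

theorem pathMatrix_apply (h : Fin n → R → S) (a b : R) :
    pathMatrix χ h a b = ∑ x : Fin n → R, χ (pathPhase a b x) * ∏ j, h j (x j) := by
  induction n generalizing a with
  | zero => simp [pathMatrix, fourierMatrix, pathPhase_of_isEmpty]
  | succ n ih =>
    rw [pathMatrix, Matrix.mul_apply, ← (Fin.consEquiv fun _ => R).sum_comp,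
      Fintype.sum_prod_type]
    refine sum_congr rfl fun z _ => ?_
    rw [ih, mul_sum]
    refine sum_congr rfl fun x _ => ?_
    change _ = χ (pathPhase a b (Fin.cons z x : Fin (n + 1) → R)) *
      ∏ j, h j ((Fin.cons z x : Fin (n + 1) → R) j)
    simp only [Matrix.mul_diagonal, fourierMatrix, Matrix.of_apply, pathPhase_cons,
      AddChar.map_add_eq_mul, Fin.prod_univ_succ, Fin.cons_zero, Fin.cons_succ, Fin.tail]
    ring

variable [IsDomain S] [StarRing S]

theorem conjTranspose_fourierMatrix_mul_self (hχ : χ.IsPrimitive) (hu : ∀ a, χ a ∈ unitary S) :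
    (fourierMatrix χ).conjTranspose * fourierMatrix χ = (Fintype.card R : S) • 1 := by
  ext a b
  have hterm (c : R) : star (χ (c * a)) * χ (c * b) = χ (c * (b - a)) := by
    rw [star_apply_of_forall_mem_unitary hu, ← AddChar.map_add_eq_mul]
    ring_nf
  simp only [Matrix.mul_apply, Matrix.conjTranspose_apply, fourierMatrix, Matrix.of_apply, hterm,
    AddChar.sum_mulShift _ hχ, sub_eq_zero, Matrix.smul_apply, Matrix.one_apply, smul_eq_mul,
    mul_ite, mul_one, mul_zero, eq_comm (a := a)]
  split_ifs <;> simp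

theorem conjTranspose_pathMatrix_mul_self (hχ : χ.IsPrimitive) (hu : ∀ a, χ a ∈ unitary S)
    {h : Fin n → R → S} (hh : ∀ j a, h j a ∈ unitary S) :
    (pathMatrix χ h).conjTranspose * pathMatrix χ h = (Fintype.card R : S) ^ (n + 1) • 1 := by
  induction n with
  | zero => rw [zero_add, pow_one, ← conjTranspose_fourierMatrix_mul_self hχ hu]; rfl
  | succ n ih =>
    let F := fourierMatrix χ
    let D := Matrix.diagonal (h 0)
    let N := pathMatrix χ (Fin.tail h)
    calc (F * D * N).conjTranspose * (F * D * N)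
        = N.conjTranspose * (D.conjTranspose * (F.conjTranspose * F) * D) * N := by
          simp only [Matrix.conjTranspose_mul, Matrix.mul_assoc]
      _ = (Fintype.card R : S) • (N.conjTranspose * (D.conjTranspose * D) * N) := by
          simp only [F, conjTranspose_fourierMatrix_mul_self hχ hu, Matrix.mul_smul,
            Matrix.smul_mul, Matrix.mul_one]
      _ = (Fintype.card R : S) • (N.conjTranspose * N) := by
          rw [conjTranspose_diagonal_mul_self (hh 0), Matrix.mul_one]
      _ = (Fintype.card R : S) ^ (n + 2) • 1 := by
          rw [ih (h := Fin.tail h) fun j => hh j.succ, smul_smul, ← pow_succ']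

end PathMatrix

section MixedRadix

variable {A : Type*}

theorem sum_blockIdx_mul_prod (k : ℕ) (Lf : Fin k → ℕ) (n : ℕ) :
    ∑ j, blockIdx k Lf n j * ∏ l ∈ univ.filter (fun l => j < l), Lf l = n % ∏ j, Lf j := by
  induction k with
  | zero => simp [Nat.mod_one]
  | succ k ih =>
    have htail := ih fun j => Lf j.succ
    have hzero : ∏ l ∈ univ.filter (fun l : Fin (k + 1) => 0 < l), Lf l =
        ∏ j : Fin k, Lf j.succ := by
      simp [prod_filter, Fin.prod_univ_succ]
    have hsucc (j : Fin k) : ∏ l ∈ univ.filter (fun l : Fin (k + 1) => j.succ < l), Lf l =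
        ∏ l ∈ univ.filter (fun l : Fin k => j < l), Lf l.succ := by
      simp [prod_filter, Fin.prod_univ_succ]
    simp only [blockIdx] at htail ⊢
    rw [Fin.sum_univ_succ, Fin.prod_univ_succ, hzero, mul_comm (Lf 0), Nat.mod_mul, ← htail,
      add_comm]
    simp only [hsucc, mul_comm]

theorem sum_range_blockIdx [AddCommMonoid A] (k : ℕ) (Lf : Fin k → ℕ) (F : (Fin k → ℕ) → A) :
    ∑ n ∈ range (∏ j, Lf j), F (blockIdx k Lf n) =
      ∑ x ∈ Fintype.piFinset fun j => range (Lf j), F x := by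
  have hmaps : Set.MapsTo (blockIdx k Lf) (range (∏ j, Lf j))
      (Fintype.piFinset fun j => range (Lf j)) := fun n hn => by
    have hprod : ∏ j, Lf j ≠ 0 := Nat.ne_zero_of_lt (mem_range.1 hn)
    simpa [blockIdx] using fun j =>
      Nat.mod_lt _ (Nat.pos_of_ne_zero (prod_ne_zero_iff.1 hprod j (mem_univ j)))
  have hinj : Set.InjOn (blockIdx k Lf) (range (∏ j, Lf j)) := fun a ha b hb hab => by
    rw [← Nat.mod_eq_of_lt (mem_range.1 ha), ← Nat.mod_eq_of_lt (mem_range.1 hb),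
      ← sum_blockIdx_mul_prod, ← sum_blockIdx_mul_prod, hab]
  exact sum_nbij _ hmaps hinj (surjOn_of_injOn_of_card_le _ hmaps hinj (by simp)) fun _ _ => rfl

theorem sum_range_prod_blockIdx [CommSemiring A] (k : ℕ) (Lf : Fin k → ℕ) (f : Fin k → ℕ → A) :
    ∑ n ∈ range (∏ j, Lf j), ∏ j, f j (blockIdx k Lf n j) =
      ∏ j, ∑ x ∈ range (Lf j), f j x := by
  rw [prod_univ_sum, ← sum_range_blockIdx]

theorem sum_range_pow_dig [AddCommMonoid A] (p m : ℕ) [NeZero p] (F : (Fin m → ℕ) → ℕ → A) :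
    ∑ n ∈ range (p ^ m), F (dig p m n) n =
      ∑ v : Fin m → ZMod p, F (fun j => (v j).val) (∑ j, (v j).val * p ^ (j : ℕ)) := by
  obtain ⟨p, rfl⟩ := Nat.exists_eq_succ_of_ne_zero (NeZero.ne p)
  rw [sum_range, ← finFunctionFinEquiv.sum_comp]
  refine sum_congr rfl fun v _ => congrArg₂ F (funext fun j => ?_) rfl
  exact congrArg Fin.val (congrFun (finFunctionFinEquiv.symm_apply_apply v) j)

theorem sum_range_natCast_zmod [AddCommMonoid A] (p : ℕ) [NeZero p] (F : ZMod p → A) :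
    ∑ n ∈ range p, F n = ∑ z, F z := by
  obtain ⟨p, rfl⟩ := Nat.exists_eq_succ_of_ne_zero (NeZero.ne p)
  rw [sum_range]
  exact sum_congr rfl fun z _ => congrArg F (Fin.cast_val_eq_self z)

end MixedRadix

section RootOfUnity

theorem zpow_sum₀ {ι G₀ : Type*} [CommGroupWithZero G₀] {a : G₀} (ha : a ≠ 0) (s : Finset ι)
    (f : ι → ℤ) : a ^ (∑ i ∈ s, f i) = ∏ i ∈ s, a ^ f i := by
  induction s using Finset.cons_induction with
  | empty => simp
  | cons i s hi ih => rw [sum_cons, prod_cons, zpow_add₀ ha, ih]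

theorem norm_omg (q : ℕ) : ‖omg q‖ = 1 := by
  have hexp : omg q = Complex.exp ((2 * Real.pi / q : ℝ) * Complex.I) := by
    rw [omg]
    push_cast
    ring_nf
  rw [hexp, Complex.norm_exp_ofReal_mul_I]

theorem omg_mem_unitary (q : ℕ) : omg q ∈ unitary ℂ := by
  rw [Unitary.mem_iff_self_mul_star, ← starRingEnd_apply, Complex.mul_conj', norm_omg,
    Complex.ofReal_one, one_pow]

theorem omg_pow_self (q : ℕ) : omg q ^ q = 1 := by
  rcases q.eq_zero_or_pos with rfl | hq
  · exact pow_zero _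
  · exact (Complex.isPrimitiveRoot_exp q hq.ne').pow_eq_one

theorem omg_pow_div_pow {p q : ℕ} (hd : p ∣ q) : (omg q ^ (q / p)) ^ p = 1 := by
  rw [← pow_mul, Nat.div_mul_cancel hd, omg_pow_self]

theorem isPrimitiveRoot_omg_pow {p q : ℕ} (hq : 0 < q) (hd : p ∣ q) :
    IsPrimitiveRoot (omg q ^ (q / p)) p :=
  (Complex.isPrimitiveRoot_exp q hq.ne').pow hq (Nat.div_mul_cancel hd).symm

end RootOfUnity

section LaurentPolynomial

open LaurentPolynomial

variable {R : Type*} [CommSemiring R]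

theorem T_sum {ι : Type*} (s : Finset ι) (f : ι → ℤ) :
    (T (∑ i ∈ s, f i) : R[T;T⁻¹]) = ∏ i ∈ s, T (f i) := by
  induction s using Finset.cons_induction with
  | empty => simp
  | cons a s ha ih => rw [sum_cons, prod_cons, T_add, ih]

/-- The generating Laurent polynomial `∑ a n T ^ (w n)` of a sequence of length `L`, with
positions scaled by `w`. -/
noncomputable def genPoly (w : ℤ) (L : ℕ) (a : ℕ → R) : R[T;T⁻¹] :=
  ∑ n ∈ range L, C (a n) * T (w * n)

theorem genPoly_prod_blockIdx (w : ℤ) (k : ℕ) (Lf : Fin k → ℕ) (a : Fin k → ℕ → R) :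
    genPoly w (∏ i, Lf i) (fun n => ∏ i, a i (blockIdx k Lf n i)) =
      ∏ i, genPoly (w * (∏ l ∈ univ.filter (fun l => i < l), Lf l : ℕ)) (Lf i) (a i) := by
  simp only [genPoly, ← sum_range_prod_blockIdx]
  refine sum_congr rfl fun n hn => ?_
  rw [prod_mul_distrib, ← map_prod, ← T_sum]
  congr 2
  conv_lhs => rw [← Nat.mod_eq_of_lt (mem_range.1 hn), ← sum_blockIdx_mul_prod]
  push_cast
  rw [mul_sum]
  exact sum_congr rfl fun i _ => by ring

variable [StarRing R]

/-- The adjoint of a Laurent polynomial, as on the unit circle: conjugate the coefficients and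
replace `T` by `T⁻¹`. -/
noncomputable def laurentAdjoint : R[T;T⁻¹] →+* R[T;T⁻¹] :=
  (invert (R := R)).toRingHom.comp (AddMonoidAlgebra.mapRingHom ℤ (starRingEnd R))

theorem laurentAdjoint_C_mul_T (r : R) (n : ℤ) :
    laurentAdjoint (C r * T n) = C (star r) * T (-n) := by
  have hsingle : AddMonoidAlgebra.mapRingHom ℤ (starRingEnd R) (C r * T n) = C (star r) * T n := by
    rw [← single_eq_C_mul_T, AddMonoidAlgebra.mapRingHom_single, single_eq_C_mul_T,
      starRingEnd_apply]
  change invert (AddMonoidAlgebra.mapRingHom ℤ (starRingEnd R) (C r * T n)) = _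
  rw [hsingle, map_mul, invert_C, invert_T]

/-- The involution `laurentAdjoint`, as a star ring structure. -/
noncomputable local instance laurentStarRing : StarRing R[T;T⁻¹] where
  star := laurentAdjoint
  star_involutive f := by
    induction f using LaurentPolynomial.induction_on' with
    | add f g hf hg => rw [map_add, map_add, hf, hg]
    | C_mul_T n r => simp only [laurentAdjoint_C_mul_T, star_star, neg_neg]
  star_mul f g := by rw [map_mul, mul_comm]
  star_add := map_add laurentAdjoint

theorem star_C_mul_T (r : R) (n : ℤ) : star (C r * T n) = C (star r) * T (-n) :=
  laurentAdjoint_C_mul_T r n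

theorem C_mul_T_mem_unitary {r : R} (hr : r ∈ unitary R) (n : ℤ) :
    C r * T n ∈ unitary R[T;T⁻¹] := by
  rw [Unitary.mem_iff_self_mul_star, star_C_mul_T, mul_mul_mul_comm, ← map_mul, ← T_add,
    Unitary.mul_star_self_of_mem hr, map_one, add_neg_cancel, T_zero, one_mul]

theorem coeff_genPoly_mul_star_genPoly (L : ℕ) (a b : ℕ → R) (u : ℤ) :
    (genPoly 1 L a * star (genPoly 1 L b)).coeff u =
      ∑ x ∈ range L, ∑ y ∈ range L, if (x : ℤ) - y = u then a x * star (b y) else 0 := by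
  have hterm (x y : ℕ) : (C (a x) * T (1 * x) * star (C (b y) * T (1 * y)) : R[T;T⁻¹]) =
      .single ((x : ℤ) - y) (a x * star (b y)) := by
    rw [star_C_mul_T, mul_mul_mul_comm, ← map_mul, ← T_add, single_eq_C_mul_T]
    ring_nf
  simp only [genPoly, star_sum, sum_mul_sum, hterm, AddMonoidAlgebra.coeff_sum,
    Finsupp.finsetSum_apply, AddMonoidAlgebra.coeff_single, Finsupp.single_apply]

theorem sum_range_sum_range_ite_add {A : Type*} [AddCommMonoid A] (L d : ℕ) (F : ℕ → ℕ → A) :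
    ∑ y ∈ range L, ∑ x ∈ range L, (if x = y + d then F x y else 0) =
      ∑ y ∈ range (L - d), F (y + d) y := by
  have hsub : range (L - d) ⊆ range L := range_subset_range.2 (Nat.sub_le L d)
  simp only [sum_ite_eq', mem_range]
  rw [← sum_subset hsub fun y _ hy => if_neg (by grind)]
  exact sum_congr rfl fun y hy => if_pos (by grind)

theorem aCorr_eq_coeff (L : ℕ) (a b : ℕ → ℂ) (u : ℤ) :
    aCorr L a b u = (genPoly 1 L a * star (genPoly 1 L b)).coeff u := by
  rw [coeff_genPoly_mul_star_genPoly, aCorr]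
  split_ifs with hu
  · have hiff (x y : ℕ) : (x : ℤ) - y = u ↔ x = y + u.toNat := by omega
    simp only [hiff]
    rw [sum_comm, sum_range_sum_range_ite_add]
    rfl
  · have hiff (x y : ℕ) : (x : ℤ) - y = u ↔ y = x + (-u).toNat := by omega
    simp only [hiff]
    rw [sum_range_sum_range_ite_add L _ fun y x => a x * star (b y)]
    rfl

theorem codeCorr_eq_coeff (M L : ℕ) (A B : ℕ → ℕ → ℂ) (u : ℤ) :
    codeCorr M L A B u =
      (∑ r ∈ range M, genPoly 1 L (A r) * star (genPoly 1 L (B r))).coeff u := by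
  simp only [codeCorr, aCorr_eq_coeff, AddMonoidAlgebra.coeff_sum, Finsupp.finsetSum_apply]

section Block

variable {p m q : ℕ}

/-- The sequence `ψ(a_t^α)` of a single block. -/
noncomputable def blockSeq (p m q : ℕ) (hm : 0 < m) (π : Equiv.Perm (Fin m))
    (cf : Fin m → ZMod q) (t α n : ℕ) : ℂ :=
  omg q ^ aFun p m q hm π cf 0 t α (dig p m n)

variable [NeZero p]

/-- The additive character `z ↦ ω_q ^ ((q / p) z)` of `ZMod p`, with values in the constant
Laurent polynomials. -/
noncomputable def omgChar (hd : p ∣ q) : AddChar (ZMod p) ℂ[T;T⁻¹] :=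
  (C : ℂ →+* ℂ[T;T⁻¹]).toMonoidHom.compAddChar (AddChar.zmodChar p (omg_pow_div_pow hd))

theorem omgChar_natCast (hd : p ∣ q) (n : ℕ) :
    omgChar hd (n : ZMod p) = C (omg q ^ (q / p * n)) := by
  rw [pow_mul, ← AddChar.zmodChar_apply' (omg_pow_div_pow hd)]
  rfl

theorem omgChar_mem_unitary (hd : p ∣ q) (z : ZMod p) : omgChar hd z ∈ unitary ℂ[T;T⁻¹] := by
  rw [← ZMod.natCast_zmod_val z, omgChar_natCast, ← mul_one (C _), ← T_zero]
  exact C_mul_T_mem_unitary (pow_mem (omg_mem_unitary q) _) 0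

theorem isPrimitive_omgChar (hq : 0 < q) (hd : p ∣ q) : (omgChar hd).IsPrimitive :=
  (AddChar.zmodChar_primitive_of_primitive_root p
    (isPrimitiveRoot_omg_pow hq hd)).compMulHom_of_isPrimitive (C : ℂ →+* ℂ[T;T⁻¹]).injective

/-- The matrix whose `(α, t)` entry is the generating polynomial of `blockSeq`: its diagonal
factors carry the linear phases and the powers of `T` of the digits. -/
noncomputable def blockMatrix (hd : p ∣ q) (w : ℤ) (π : Equiv.Perm (Fin m))
    (cf : Fin m → ZMod q) : Matrix (ZMod p) (ZMod p) ℂ[T;T⁻¹] :=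
  pathMatrix (omgChar hd) fun j z =>
    C (omg q ^ ((cf (π j)).val * z.val)) * T (w * (z.val * p ^ (π j : ℕ) : ℕ))

theorem conjTranspose_blockMatrix_mul_self (hq : 0 < q) (hd : p ∣ q) (w : ℤ)
    (π : Equiv.Perm (Fin m)) (cf : Fin m → ZMod q) :
    (blockMatrix hd w π cf).conjTranspose * blockMatrix hd w π cf =
      (p : ℂ[T;T⁻¹]) ^ (m + 1) • 1 := by
  rw [blockMatrix, conjTranspose_pathMatrix_mul_self (isPrimitive_omgChar hq hd)
    (omgChar_mem_unitary hd), ZMod.card]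
  exact fun j z => C_mul_T_mem_unitary (pow_mem (omg_mem_unitary q) _) _

theorem C_omg_zpow_aFun (hd : p ∣ q) (hm : 0 < m) (π : Equiv.Perm (Fin m))
    (cf : Fin m → ZMod q) (t α : ℕ) (v : Fin m → ZMod p) :
    C (omg q ^ aFun p m q hm π cf 0 t α fun j => (v j).val) =
      omgChar hd (pathPhase (α : ZMod p) t (v ∘ π)) *
        ∏ j, C (omg q ^ ((cf (π j)).val * (v (π j)).val)) := by
  obtain ⟨n, rfl⟩ := Nat.exists_eq_succ_of_ne_zero hm.ne'
  let N : ℕ := α * (v (π 0)).val + ∑ j : Fin n, (v (π j.castSucc)).val * (v (π j.succ)).val +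
    (v (π (Fin.last n))).val * t
  have hN : pathPhase (α : ZMod p) t (v ∘ π) = (N : ZMod p) := by
    simp [N, pathPhase_succ]
  have haFun : aFun p (n + 1) q hm π cf 0 t α (fun j => (v j).val) =
      ((q / p * N + ∑ j, (cf (π j)).val * (v (π j)).val : ℕ) : ℤ) := by
    rw [Equiv.sum_comp π fun j => (cf j).val * (v j).val]
    simp only [aFun, fQuad, ZMod.val_zero]
    change ((q / p : ℕ) : ℤ) * ∑ j : Fin n, ((v (π j.castSucc)).val : ℤ) * (v (π j.succ)).val +
      _ + ((q / p : ℕ) : ℤ) * α * (v (π 0)).val +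
      ((q / p : ℕ) : ℤ) * t * (v (π (Fin.last n))).val + 0 = _
    push_cast [N]
    ring
  rw [haFun, hN, omgChar_natCast, zpow_natCast, pow_add, map_mul, ← map_prod,
    prod_pow_eq_pow_sum]

theorem genPoly_blockSeq (hd : p ∣ q) (hm : 0 < m) (w : ℤ) (π : Equiv.Perm (Fin m))
    (cf : Fin m → ZMod q) (t α : ℕ) :
    genPoly w (p ^ m) (blockSeq p m q hm π cf t α) = blockMatrix hd w π cf α t := by
  have hperm (F : (Fin m → ZMod p) → ℂ[T;T⁻¹]) : ∑ v : Fin m → ZMod p, F (v ∘ π) = ∑ x, F x :=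
    (π.symm.arrowCongr (Equiv.refl (ZMod p))).sum_comp F
  have hT (v : Fin m → ZMod p) : (T (w * (∑ j, (v j).val * p ^ (j : ℕ) : ℕ)) : ℂ[T;T⁻¹]) =
      ∏ j, T (w * ((v (π j)).val * p ^ (π j : ℕ) : ℕ)) := by
    rw [← Equiv.sum_comp π fun j => (v j).val * p ^ (j : ℕ), Nat.cast_sum, mul_sum, T_sum]
  rw [blockMatrix, pathMatrix_apply]
  refine ((sum_range_pow_dig p m fun v n =>
    C (omg q ^ aFun p m q hm π cf 0 t α v) * T (w * n)).trans ?_).trans (hperm _)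
  refine sum_congr rfl fun v _ => ?_
  simp only [C_omg_zpow_aFun hd, hT, mul_assoc, ← prod_mul_distrib, Function.comp_apply]

theorem sum_genPoly_blockSeq_mul_star (hq : 0 < q) (hd : p ∣ q) (hm : 0 < m) (w : ℤ)
    (π : Equiv.Perm (Fin m)) (cf : Fin m → ZMod q) {t t' : ℕ} (ht : t < p) (ht' : t' < p) :
    ∑ α ∈ range p, genPoly w (p ^ m) (blockSeq p m q hm π cf t α) *
        star (genPoly w (p ^ m) (blockSeq p m q hm π cf t' α)) =
      if t = t' then (p : ℂ[T;T⁻¹]) ^ (m + 1) else 0 := by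
  have hcast : (t' : ZMod p) = t ↔ t = t' := by
    rw [ZMod.natCast_eq_natCast_iff', Nat.mod_eq_of_lt ht, Nat.mod_eq_of_lt ht', eq_comm]
  let M := blockMatrix hd w π cf
  calc
    _ = ∑ α : ZMod p, M α t * star (M α t') := by
      simp only [genPoly_blockSeq hd, M]
      exact sum_range_natCast_zmod p fun α => M α t * star (M α t')
    _ = (M.conjTranspose * M) t' t := by
      simp only [Matrix.mul_apply, Matrix.conjTranspose_apply, mul_comm]
    _ = _ := by
      rw [conjTranspose_blockMatrix_mul_self hq, Matrix.smul_apply, Matrix.one_apply, smul_eq_mul,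
        mul_ite, mul_one, mul_zero]
      exact if_congr hcast rfl rfl

end Block

section BigCode

variable {k : ℕ} {p m : Fin k → ℕ} {q : ℕ}

theorem bigCode_apply (hm : ∀ i, 0 < m i) (π : ∀ i, Equiv.Perm (Fin (m i)))
    (cf : ∀ i, Fin (m i) → ZMod q) (t : Fin k → ℕ) (r n : ℕ) :
    bigCode k p m hm q π cf t r n = ∏ i, blockSeq (p i) (m i) q (hm i) (π i) (cf i) (t i)
      (blockIdx k p r i) (blockIdx k (fun j => p j ^ m j) n i) :=
  zpow_sum₀ (Complex.exp_ne_zero _) _ _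

theorem sum_genPoly_bigCode_mul_star (hm : ∀ i, 0 < m i) (hq : 0 < q) (hdvd : ∀ i, p i ∣ q)
    (π : ∀ i, Equiv.Perm (Fin (m i))) (cf : ∀ i, Fin (m i) → ZMod q) {t t' : Fin k → ℕ}
    (ht : ∀ i, t i < p i) (ht' : ∀ i, t' i < p i) :
    ∑ r ∈ range (∏ i, p i), genPoly 1 (∏ i, p i ^ m i) (bigCode k p m hm q π cf t r) *
        star (genPoly 1 (∏ i, p i ^ m i) (bigCode k p m hm q π cf t' r)) =
      if t = t' then ∏ i, (p i : ℂ[T;T⁻¹]) ^ (m i + 1) else 0 := by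
  have (i : Fin k) : NeZero (p i) := ⟨Nat.ne_zero_of_lt (ht i)⟩
  let W (i : Fin k) : ℤ := 1 * (∏ l ∈ univ.filter (fun l => i < l), p l ^ m l : ℕ)
  let g (t : Fin k → ℕ) (i : Fin k) (α : ℕ) : ℂ[T;T⁻¹] :=
    genPoly (W i) (p i ^ m i) (blockSeq (p i) (m i) q (hm i) (π i) (cf i) (t i) α)
  have hrow (t : Fin k → ℕ) (r : ℕ) :
      genPoly 1 (∏ i, p i ^ m i) (bigCode k p m hm q π cf t r) =
        ∏ i, g t i (blockIdx k p r i) := by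
    rw [← genPoly_prod_blockIdx]
    exact congrArg _ (funext (bigCode_apply hm π cf t r))
  calc
    _ = ∑ r ∈ range (∏ i, p i),
          ∏ i, g t i (blockIdx k p r i) * star (g t' i (blockIdx k p r i)) := by
      simp only [hrow, star_prod, prod_mul_distrib]
    _ = ∏ i, ∑ α ∈ range (p i), g t i α * star (g t' i α) :=
      sum_range_prod_blockIdx k p fun i α => g t i α * star (g t' i α)
    _ = ∏ i, if t i = t' i then (p i : ℂ[T;T⁻¹]) ^ (m i + 1) else 0 :=
      prod_congr rfl fun i _ => sum_genPoly_blockSeq_mul_star hq (hdvd i) (hm i) (W i) (π i)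
        (cf i) (ht i) (ht' i)
    _ = _ := by simp only [prod_ite_zero, mem_univ, true_imp_iff, funext_iff]

theorem statement11_general (hm : ∀ i, 0 < m i) (hq : 0 < q) (hdvd : ∀ i, p i ∣ q)
    (π : ∀ i, Equiv.Perm (Fin (m i))) (cf : ∀ i, Fin (m i) → ZMod q) {t t' : Fin k → ℕ}
    (ht : ∀ i, t i < p i) (ht' : ∀ i, t' i < p i) (u : ℤ) :
    codeCorr (∏ i, p i) (∏ i, p i ^ m i)
        (bigCode k p m hm q π cf t) (bigCode k p m hm q π cf t') u =
      if u = 0 ∧ t = t' then ((∏ i, p i : ℕ) : ℂ) * ((∏ i, p i ^ m i : ℕ) : ℂ)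
      else 0 := by
  have hconst : ∏ i, (p i : ℂ[T;T⁻¹]) ^ (m i + 1) =
      C (((∏ i, p i : ℕ) : ℂ) * ((∏ i, p i ^ m i : ℕ) : ℂ)) := by
    simp [pow_succ', prod_mul_distrib]
  rw [codeCorr_eq_coeff, sum_genPoly_bigCode_mul_star hm hq hdvd π cf ht ht', hconst]
  by_cases htt : t = t'
  · simp only [htt, and_true, if_true, C_apply]
  · simp [htt]

end BigCode

end LaurentPolynomial

/-- with `K = ∏ p_i` and `L = ∏ p_i^{m_i}`, the family
`{C_{(t_1,…,t_k)} : t_i ∈ {0,…,p_i-1}}` forms a `(K,K,L)`-CCC. -/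
theorem statement11 (k : ℕ) (hk : 0 < k) (p m : Fin k → ℕ) (hp : ∀ i, (p i).Prime)
    (hm : ∀ i, 0 < m i) (q : ℕ) (hq : 0 < q) (hdvd : ∀ i, p i ∣ q)
    (π : ∀ i, Equiv.Perm (Fin (m i))) (cf : ∀ i, Fin (m i) → ZMod q)
    (t t' : Fin k → ℕ) (ht : ∀ i, t i < p i) (ht' : ∀ i, t' i < p i)
    (u : ℤ) (hu : u.natAbs < ∏ i, p i ^ m i) :
    codeCorr (∏ i, p i) (∏ i, p i ^ m i)
        (bigCode k p m hm q π cf t) (bigCode k p m hm q π cf t') u =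
      if u = 0 ∧ t = t' then ((∏ i, p i : ℕ) : ℂ) * ((∏ i, p i ^ m i : ℕ) : ℂ)
      else 0 :=
  statement11_general hm hq hdvd π cf ht ht' u
end
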